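/- arXiv:2110.06322 — 3 statements merged into one kernel-verified Lean document; each statement's English description precedes it below -/
import Mathlib

section
/- Let S be a nonempty closed subset of Euclidean space ℝ^d, let x ∈ ℝ^d, and let p ∈ S be a nearest point of S to x, i.e. dist(x, p) = infDist(x, S). Then for every t ∈ [0, 1], the point y = x + t • (p − x) on the segment from x to p also has p as a nearest point of S, i.e. dist(y, p) = infDist(y, S). -/
/-- If `p ∈ S` is a nearest point of the nonempty closed set
`S ⊆ ℝ^d` to `x`, then every point `y = x + t • (p - x)` on the segment from
`x` to `p` (for `t ∈ [0,1]`) also has `p` as a nearest point of `S`. -/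
theorem closest_point_constant_along_normal_segment
    {d : ℕ} (S : Set (EuclideanSpace ℝ (Fin d)))
    (hS : S.Nonempty) (hSclosed : IsClosed S)
    (x p : EuclideanSpace ℝ (Fin d)) (hp : p ∈ S)
    (hdist : dist x p = Metric.infDist x S) :
    ∀ t ∈ Set.Icc (0 : ℝ) 1,
      dist (x + t • (p - x)) p = Metric.infDist (x + t • (p - x)) S := by
  rintro t ⟨h0, h1⟩
  have e1 : dist (x + t • (p - x)) p = (1 - t) * dist x p := by
    have h : x + t • (p - x) - p = (1 - t) • (x - p) := by module
    rw [dist_eq_norm, h, norm_smul, Real.norm_of_nonneg (by linarith), dist_eq_norm]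
  have e2 : dist x (x + t • (p - x)) = t * dist x p := by
    have h : x - (x + t • (p - x)) = t • (x - p) := by module
    rw [dist_eq_norm, h, norm_smul, Real.norm_of_nonneg h0, dist_eq_norm]
  have h3 : Metric.infDist x S
      ≤ Metric.infDist (x + t • (p - x)) S + dist x (x + t • (p - x)) :=
    Metric.infDist_le_infDist_add_dist
  have h4 : Metric.infDist (x + t • (p - x)) S ≤ dist (x + t • (p - x)) p :=
    Metric.infDist_le_dist_of_mem hp
  refine le_antisymm ?_ h4
  rw [e1]
  rw [e2, ← hdist] at h3
  linarith
end

section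
/- Let S be a nonempty closed subset of Euclidean space ℝ^d, let x ∈ ℝ^d, and let p ∈ S satisfy dist(x, p) = infDist(x, S). Then for every t with 0 < t < 1, the point y = x + t • (p − x) has p as its UNIQUE nearest point in S: if q ∈ S satisfies dist(y, q) = infDist(y, S), then q = p. -/
/-- If `p ∈ S` is a nearest point of the nonempty closed set
`S ⊆ ℝ^d` to `x`, then for every `0 < t < 1` the point `y = x + t • (p - x)`
has `p` as its unique nearest point in `S`: any `q ∈ S` realizing the
infimum distance to `y` equals `p`. -/
theorem closest_point_unique_on_open_normal_segment
    {d : ℕ} (S : Set (EuclideanSpace ℝ (Fin d)))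
    (hS : S.Nonempty) (hSclosed : IsClosed S)
    (x p : EuclideanSpace ℝ (Fin d)) (hp : p ∈ S)
    (hdist : dist x p = Metric.infDist x S) :
    ∀ t : ℝ, 0 < t → t < 1 →
      ∀ q ∈ S, dist (x + t • (p - x)) q = Metric.infDist (x + t • (p - x)) S →
        q = p := by
  intro t ht0 ht1 q hq hy
  have hxq : dist x p ≤ dist x q := hdist ▸ Metric.infDist_le_dist_of_mem hq
  have hyq : dist (x + t • (p - x)) q ≤ dist (x + t • (p - x)) p :=
    hy ▸ Metric.infDist_le_dist_of_mem hp
  have h1 : dist x (x + t • (p - x)) = t * dist x p := by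
    rw [dist_self_add_right, norm_smul, Real.norm_of_nonneg ht0.le, dist_eq_norm, norm_sub_rev]
  have h2 : dist (x + t • (p - x)) p = (1 - t) * dist x p := by
    have h : x + t • (p - x) - p = (1 - t) • (x - p) := by module
    rw [dist_eq_norm, h, norm_smul, Real.norm_of_nonneg (by linarith), dist_eq_norm]
  have htri := dist_triangle x (x + t • (p - x)) q
  have hD : dist x q = dist x p := by linarith
  have key := eq_lineMap_of_dist_eq_mul_of_dist_eq_mul (x := x) (y := x + t • (p - x)) (z := q)
    (r := t) (by rw [hD, h1]) (by rw [hD]; linarith)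
  rw [AffineMap.lineMap_apply, vsub_eq_sub, vadd_eq_add, add_comm, add_left_inj] at key
  have h3 := smul_right_injective _ ht0.ne' key
  exact (sub_left_injective h3).symm
end

section
/- Let S be a nonempty closed subset of Euclidean space ℝ^d, let U ⊆ ℝ^d be an open set, and let cp : U → ℝ^d be a map such that for every x ∈ U, cp(x) ∈ S, dist(x, cp(x)) = infDist(x, S), and cp(x) is the unique point of S at this minimal distance. Let f : S → ℝ be any function and define the closest point extension E f : U → ℝ by (E f)(x) = f(cp(x)). Then for every x ∈ U and every t ∈ [0, 1] such that the point y = x + t • (cp(x) − x) lies in U, one has (E f)(y) = (E f)(x); moreover (E f)(x) = f(x) whenever x ∈ S ∩ U. -/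
/-- Let `cp` map every `x ∈ U` to its unique nearest point in the
nonempty closed set `S ⊆ ℝ^d`. For `f : S → ℝ`, the closest point extension
`Ef x = f (cp x)` is constant along the normal segment from `x` to `cp x`
(as long as the point stays in `U`), and agrees with `f` on `S ∩ U`. -/
theorem closest_point_extension_constant_along_normals
    {d : ℕ} (S : Set (EuclideanSpace ℝ (Fin d)))
    (hS : S.Nonempty) (hSclosed : IsClosed S)
    (U : Set (EuclideanSpace ℝ (Fin d))) (hU : IsOpen U)
    (cp : EuclideanSpace ℝ (Fin d) → EuclideanSpace ℝ (Fin d))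
    (hmem : ∀ x ∈ U, cp x ∈ S)
    (hdist : ∀ x ∈ U, dist x (cp x) = Metric.infDist x S)
    (huniq : ∀ x ∈ U, ∀ q ∈ S, dist x q = Metric.infDist x S → q = cp x)
    (f : S → ℝ)
    (Ef : EuclideanSpace ℝ (Fin d) → ℝ)
    (hEf : ∀ x (hx : x ∈ U), Ef x = f ⟨cp x, hmem x hx⟩) :
    (∀ x ∈ U, ∀ t ∈ Set.Icc (0 : ℝ) 1,
        x + t • (cp x - x) ∈ U → Ef (x + t • (cp x - x)) = Ef x) ∧
    (∀ x, ∀ hx : x ∈ S ∩ U, Ef x = f ⟨x, hx.1⟩) := by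
  refine ⟨?_, ?_⟩
  · intro x hx t ht hy
    have h1 : dist x (x + t • (cp x - x)) = t * dist x (cp x) := by
      rw [dist_self_add_right, norm_smul, Real.norm_of_nonneg ht.1, dist_comm, dist_eq_norm]
    have h2 : dist (x + t • (cp x - x)) (cp x) = (1 - t) * dist x (cp x) := by
      have h : x + t • (cp x - x) - cp x = (1 - t) • (x - cp x) := by module
      rw [dist_eq_norm, h, norm_smul, Real.norm_of_nonneg (by linarith [ht.2]), dist_eq_norm]
    have h3 := Metric.infDist_le_infDist_add_dist (s := S) (x := x) (y := x + t • (cp x - x))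
    have h4 := Metric.infDist_le_dist_of_mem (x := x + t • (cp x - x)) (hmem x hx)
    have h5 := hdist x hx
    have h6 : cp x = cp (x + t • (cp x - x)) :=
      huniq _ hy _ (hmem x hx) (by linarith)
    rw [hEf _ hy, hEf x hx]
    exact congrArg f (Subtype.ext h6.symm)
  · intro x hx
    have h : x = cp x :=
      huniq x hx.2 x hx.1 (by rw [dist_self, Metric.infDist_zero_of_mem hx.1])
    rw [hEf x hx.2]
    exact congrArg f (Subtype.ext h.symm)
end
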